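/- arXiv:1506.06002 — 2 statements merged into one kernel-verified Lean document; each statement's English description precedes it below -/
import Mathlib

section
/- Let H^(2) = Γ^(2) ∩ Γ_s^(2), and set g₁' = [[0,0,i/√2],[0,1,0],[i√2,0,0]] and g₂' = [[1,0,i/√2],[0,1,0],[0,0,1]]. Then Γ_s^(2) is the disjoint union of the three left cosets H^(2), g₁'H^(2) and g₂'H^(2); in particular these three cosets are pairwise disjoint and their union is all of Γ_s^(2). -/
noncomputable section

open Matrix

/-- The Hermitian form matrix `J`. -/
def matJ : Matrix (Fin 3) (Fin 3) ℂ := !![0,0,1; 0,1,0; 1,0,0]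

/-- Membership in `U(2,1;J)`. -/
def inU21 (M : Matrix (Fin 3) (Fin 3) ℂ) : Prop := IsUnit M ∧ Mᴴ * matJ * M = matJ

/-- `i√2`. -/
def isq2 : ℂ := Complex.I * (Real.sqrt 2 : ℂ)

/-- Membership in the ring of integers `O₂ = ℤ + ℤ·i√2`. -/
def inO2 (z : ℂ) : Prop := ∃ a b : ℤ, z = (a : ℂ) + (b : ℂ) * isq2

/-- The Picard modular group `Γ^(2)` (as a set of matrices). -/
def GammaP2 : Set (Matrix (Fin 3) (Fin 3) ℂ) :=
  {M | inU21 M ∧ ∀ j k : Fin 3, inO2 (M j k)}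

/-- The sister group `Γ_s^(2)` (as a set of matrices). -/
def GammaS2 : Set (Matrix (Fin 3) (Fin 3) ℂ) :=
  {M | inU21 M ∧ inO2 (M 0 0) ∧ inO2 (M 0 1) ∧ inO2 (M 1 1) ∧ inO2 (M 1 2) ∧
    inO2 (M 2 2) ∧ inO2 (isq2 * M 0 2) ∧ inO2 (M 1 0 / isq2) ∧
    inO2 (M 2 0 / isq2) ∧ inO2 (M 2 1 / isq2)}

/-- `H^(2) = Γ^(2) ∩ Γ_s^(2)`. -/
def H2 : Set (Matrix (Fin 3) (Fin 3) ℂ) := GammaP2 ∩ GammaS2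

def g₁' : Matrix (Fin 3) (Fin 3) ℂ :=
  !![0, 0, Complex.I / (Real.sqrt 2 : ℂ); 0, 1, 0; Complex.I * (Real.sqrt 2 : ℂ), 0, 0]

def g₂' : Matrix (Fin 3) (Fin 3) ℂ :=
  !![1, 0, Complex.I / (Real.sqrt 2 : ℂ); 0, 1, 0; 0, 0, 1]

lemma isq2_sq : isq2 * isq2 = -2 := by
  have h : ((Real.sqrt 2 : ℝ) : ℂ) * ((Real.sqrt 2 : ℝ) : ℂ) = 2 := by
    rw [← Complex.ofReal_mul, Real.mul_self_sqrt (by norm_num)]; norm_num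
  unfold isq2
  linear_combination (Complex.I * Complex.I) * h + 2 * Complex.I_mul_I

lemma isq2_ne : isq2 ≠ 0 := by
  intro h
  have := isq2_sq
  rw [h] at this
  norm_num at this

lemma isq2_conj : star isq2 = -isq2 := by
  simp [isq2]

lemma isq2_inv : isq2⁻¹ = -isq2 / 2 := by
  have := isq2_ne
  field_simp
  linear_combination isq2_sq

lemma isq2_elt : Complex.I / (Real.sqrt 2 : ℂ) = -isq2⁻¹ := by
  have h : ((Real.sqrt 2 : ℝ) : ℂ) * ((Real.sqrt 2 : ℝ) : ℂ) = 2 := by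
    rw [← Complex.ofReal_mul, Real.mul_self_sqrt (by norm_num)]; norm_num
  have h0 : ((Real.sqrt 2 : ℝ) : ℂ) ≠ 0 := by
    intro h0
    rw [h0] at h
    norm_num at h
  rw [isq2_inv]
  unfold isq2
  field_simp
  linear_combination -h

lemma inO2.add {x y : ℂ} : inO2 x → inO2 y → inO2 (x + y) := by
  rintro ⟨a, b, rfl⟩ ⟨c, d, rfl⟩
  exact ⟨a + c, b + d, by push_cast; ring⟩

lemma inO2.neg {x : ℂ} : inO2 x → inO2 (-x) := by
  rintro ⟨a, b, rfl⟩
  exact ⟨-a, -b, by push_cast; ring⟩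

lemma inO2.sub {x y : ℂ} (hx : inO2 x) (hy : inO2 y) : inO2 (x - y) := by
  rw [sub_eq_add_neg]
  exact hx.add hy.neg

lemma inO2.mul {x y : ℂ} : inO2 x → inO2 y → inO2 (x * y) := by
  rintro ⟨a, b, rfl⟩ ⟨c, d, rfl⟩
  refine ⟨a * c - 2 * b * d, a * d + b * c, ?_⟩
  push_cast
  linear_combination (b * d : ℂ) * isq2_sq

lemma inO2.conj {x : ℂ} : inO2 x → inO2 (star x) := by
  rintro ⟨a, b, rfl⟩
  refine ⟨a, -b, ?_⟩
  rw [star_add, star_mul', isq2_conj]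
  simp

lemma inO2_isq2 : inO2 isq2 := ⟨0, 1, by simp⟩

lemma inO2_zero : inO2 0 := ⟨0, 0, by simp⟩

lemma inO2.of_div {x : ℂ} (h : inO2 (x / isq2)) : inO2 x := by
  have := h.mul inO2_isq2
  rwa [div_mul_cancel₀ _ isq2_ne] at this

lemma not_inO2_inv : ¬ inO2 (isq2⁻¹) := by
  rintro ⟨a, b, h⟩
  have h1 : (1 : ℂ) = a * isq2 - 2 * b := by
    have h2 : isq2⁻¹ * isq2 = 1 := inv_mul_cancel₀ isq2_ne
    rw [h] at h2
    linear_combination -h2 + (b : ℂ) * isq2_sq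
  have h3 := congrArg Complex.re h1
  simp [isq2] at h3
  have h4 : (1 : ℤ) = -(2 * b) := by
    have h5 : ((1 : ℤ) : ℝ) = ((-(2 * b) : ℤ) : ℝ) := by
      push_cast
      exact h3
    exact Int.cast_injective h5
  omega

/-- The residue field of `O₂` at `i√2` has two elements. -/
lemma inO2.parity {x : ℂ} : inO2 x → inO2 (x / isq2) ∨ inO2 ((x + 1) / isq2) := by
  rintro ⟨a, b, rfl⟩
  have h0 := isq2_ne
  rcases Int.even_or_odd' a with ⟨c, rfl | rfl⟩
  · left
    refine ⟨b, -c, ?_⟩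
    field_simp
    push_cast
    linear_combination (c : ℂ) * isq2_sq
  · right
    refine ⟨b, -(c + 1), ?_⟩
    field_simp
    push_cast
    linear_combination (c + 1 : ℂ) * isq2_sq

lemma inU21_of {M : Matrix (Fin 3) (Fin 3) ℂ} (h : Mᴴ * matJ * M = matJ) : inU21 M := by
  refine ⟨?_, h⟩
  have hJ : matJ * matJ = 1 := by
    ext i j
    fin_cases i <;> fin_cases j <;> simp [matJ, Matrix.mul_apply, Fin.sum_univ_three]
  have : (matJ * Mᴴ * matJ) * M = 1 := by
    rw [Matrix.mul_assoc matJ, Matrix.mul_assoc matJ, h, hJ]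
  exact (Matrix.isUnit_iff_isUnit_det _).2 (Matrix.isUnit_det_of_left_inverse this)

lemma inU21.mul {M N : Matrix (Fin 3) (Fin 3) ℂ} (hM : inU21 M) (hN : inU21 N) :
    inU21 (M * N) := by
  apply inU21_of
  rw [Matrix.conjTranspose_mul]
  calc Nᴴ * Mᴴ * matJ * (M * N) = Nᴴ * (Mᴴ * matJ * M) * N := by
        simp only [Matrix.mul_assoc]
    _ = matJ := by rw [hM.2, hN.2]

lemma g1_eq : g₁' = !![0, 0, -isq2⁻¹; 0, 1, 0; isq2, 0, 0] := by
  rw [g₁', isq2_elt, ← isq2]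

lemma g2_eq : g₂' = !![1, 0, -isq2⁻¹; 0, 1, 0; 0, 0, 1] := by
  rw [g₂', isq2_elt]

def k1 : Matrix (Fin 3) (Fin 3) ℂ := !![0, 0, isq2⁻¹; 0, 1, 0; -isq2, 0, 0]

def k2 : Matrix (Fin 3) (Fin 3) ℂ := !![1, 0, isq2⁻¹; 0, 1, 0; 0, 0, 1]

lemma isq2_conj' : (starRingEnd ℂ) isq2 = -isq2 := isq2_conj

lemma g1_U : inU21 g₁' := by
  apply inU21_of
  have h0 := isq2_ne
  rw [g1_eq]
  ext i j
  fin_cases i <;> fin_cases j <;>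
    simp [matJ, Matrix.mul_apply, Fin.sum_univ_three, isq2_conj', h0]

lemma g2_U : inU21 g₂' := by
  apply inU21_of
  have h0 := isq2_ne
  rw [g2_eq]
  ext i j
  fin_cases i <;> fin_cases j <;>
    simp [matJ, Matrix.mul_apply, Fin.sum_univ_three, isq2_conj', h0, inv_neg]

lemma k1_U : inU21 k1 := by
  apply inU21_of
  have h0 := isq2_ne
  rw [k1]
  ext i j
  fin_cases i <;> fin_cases j <;>
    simp [matJ, Matrix.mul_apply, Fin.sum_univ_three, isq2_conj', h0]

lemma k2_U : inU21 k2 := by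
  apply inU21_of
  have h0 := isq2_ne
  rw [k2]
  ext i j
  fin_cases i <;> fin_cases j <;>
    simp [matJ, Matrix.mul_apply, Fin.sum_univ_three, isq2_conj', h0, inv_neg]

lemma g1_k1 : g₁' * k1 = 1 := by
  have h0 := isq2_ne
  rw [g1_eq, k1]
  ext i j
  fin_cases i <;> fin_cases j <;> simp [Matrix.mul_apply, Fin.sum_univ_three, h0]

lemma g2_k2 : g₂' * k2 = 1 := by
  rw [g2_eq, k2]
  ext i j
  fin_cases i <;> fin_cases j <;> simp [Matrix.mul_apply, Fin.sum_univ_three]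

lemma mem_H2_iff {M : Matrix (Fin 3) (Fin 3) ℂ} : M ∈ H2 ↔ M ∈ GammaS2 ∧ inO2 (M 0 2) := by
  constructor
  · rintro ⟨h1, h2⟩
    exact ⟨h2, h1.2 0 2⟩
  · rintro ⟨h, hc⟩
    refine ⟨?_, h⟩
    obtain ⟨hU, h00, h01, h11, h12, h22, h02, h10, h20, h21⟩ := h
    refine ⟨hU, ?_⟩
    intro i j
    fin_cases i <;> fin_cases j
    exacts [h00, h01, hc, h10.of_div, h11, h12, h20.of_div, h21.of_div, h22]

/-- The entries in the last column cannot both be divisible by `i√2`. -/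
lemma key {M : Matrix (Fin 3) (Fin 3) ℂ} (hM : M ∈ H2) (h : inO2 (M 2 2 / isq2)) : False := by
  rw [mem_H2_iff] at hM
  obtain ⟨⟨hU, h00, h01, h11, h12, h22, h02, h10, h20, h21⟩, hc⟩ := hM
  have e := congrFun (congrFun hU.2 0) 2
  have h0 := isq2_ne
  simp only [matJ, Matrix.mul_apply, Fin.sum_univ_three, Matrix.conjTranspose_apply] at e
  simp at e
  have d1 : (starRingEnd ℂ) (M 1 0) = -isq2 * star (M 1 0 / isq2) := by
    rw [star_div₀, isq2_conj]
    simp only [Complex.star_def]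
    field_simp
  have d2 : (starRingEnd ℂ) (M 2 0) = -isq2 * star (M 2 0 / isq2) := by
    rw [star_div₀, isq2_conj]
    simp only [Complex.star_def]
    field_simp
  rw [d1, d2] at e
  apply not_inO2_inv
  have := ((h00.conj.mul h).sub (h10.conj.mul h12)).sub (h20.conj.mul hc)
  convert this using 1
  rw [inv_eq_iff_eq_inv, eq_comm, inv_eq_iff_eq_inv, ← one_div, eq_div_iff h0, ← e]
  simp only [Complex.star_def]
  field_simp
  ring

/-- `Γ_s^(2)` is the disjoint union of the three left cosets `H^(2)`, `g₁'H^(2)`, `g₂'H^(2)`. -/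
theorem gammaS2_coset_decomposition :
    (GammaS2 = H2 ∪ (g₁' * ·) '' H2 ∪ (g₂' * ·) '' H2) ∧
    Disjoint H2 ((g₁' * ·) '' H2) ∧
    Disjoint H2 ((g₂' * ·) '' H2) ∧
    Disjoint ((g₁' * ·) '' H2) ((g₂' * ·) '' H2) := by
  have G1 : ∀ M : Matrix (Fin 3) (Fin 3) ℂ, ∀ j, (g₁' * M) 0 j = -(M 2 j / isq2) ∧
      (g₁' * M) 1 j = M 1 j ∧ (g₁' * M) 2 j = isq2 * M 0 j := by
    intro M j
    rw [g1_eq]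
    simp [Matrix.mul_apply, Fin.sum_univ_three]
    ring
  have G2 : ∀ M : Matrix (Fin 3) (Fin 3) ℂ, ∀ j, (g₂' * M) 0 j = M 0 j - M 2 j / isq2 ∧
      (g₂' * M) 1 j = M 1 j ∧ (g₂' * M) 2 j = M 2 j := by
    intro M j
    rw [g2_eq]
    simp [Matrix.mul_apply, Fin.sum_univ_three]
    ring
  have K1 : ∀ M : Matrix (Fin 3) (Fin 3) ℂ, ∀ j, (k1 * M) 0 j = M 2 j / isq2 ∧
      (k1 * M) 1 j = M 1 j ∧ (k1 * M) 2 j = -(isq2 * M 0 j) := by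
    intro M j
    rw [k1]
    simp [Matrix.mul_apply, Fin.sum_univ_three]
    ring
  have K2 : ∀ M : Matrix (Fin 3) (Fin 3) ℂ, ∀ j, (k2 * M) 0 j = M 0 j + M 2 j / isq2 ∧
      (k2 * M) 1 j = M 1 j ∧ (k2 * M) 2 j = M 2 j := by
    intro M j
    rw [k2]
    simp [Matrix.mul_apply, Fin.sum_univ_three]
    ring
  have h0 := isq2_ne
  refine ⟨?_, ?_, ?_, ?_⟩
  · apply Set.Subset.antisymm
    · intro M hM
      by_cases hc : inO2 (M 0 2)
      · exact Or.inl (Or.inl (mem_H2_iff.2 ⟨hM, hc⟩))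
      obtain ⟨hU, h00, h01, h11, h12, h22, h02, h10, h20, h21⟩ := hM
      by_cases hk : inO2 (M 2 2 / isq2)
      · refine Or.inl (Or.inr ⟨k1 * M, mem_H2_iff.2 ⟨⟨k1_U.mul hU, ?_⟩, ?_⟩, ?_⟩)
        · simp only [(K1 M _).1, (K1 M _).2.1, (K1 M _).2.2, neg_div, mul_div_cancel_left₀ _ h0,
            mul_div_cancel₀ _ h0]
          exact ⟨h20, h21, h11, h12, h02.neg, h22, h10, h00.neg, h01.neg⟩
        · rw [(K1 M _).1]
          exact hk
        · change g₁' * (k1 * M) = M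
          rw [← Matrix.mul_assoc, g1_k1, Matrix.one_mul]
      · have hs : inO2 (M 0 2 + M 2 2 / isq2) := by
          rcases h22.parity with h | h
          · exact absurd h hk
          rcases h02.parity with h' | h'
          · rw [mul_div_cancel_left₀ _ h0] at h'
            exact absurd h' hc
          · have := (h.add h').add inO2_isq2
            convert this using 1
            field_simp
            linear_combination -isq2_sq
        refine Or.inr ⟨k2 * M, mem_H2_iff.2 ⟨⟨k2_U.mul hU, ?_⟩, ?_⟩, ?_⟩
        · simp only [(K2 M _).1, (K2 M _).2.1, (K2 M _).2.2]
          exact ⟨h00.add h20, h01.add h21, h11, h12, h22, inO2_isq2.mul hs, h10, h20, h21⟩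
        · rw [(K2 M _).1]
          exact hs
        · change g₂' * (k2 * M) = M
          rw [← Matrix.mul_assoc, g2_k2, Matrix.one_mul]
    · rintro M ((hM | ⟨N, hN, rfl⟩) | ⟨N, hN, rfl⟩)
      · exact hM.2
      · rw [mem_H2_iff] at hN
        obtain ⟨⟨hU, h00, h01, h11, h12, h22, h02, h10, h20, h21⟩, hc⟩ := hN
        refine ⟨g1_U.mul hU, ?_⟩
        simp only [(G1 N _).1, (G1 N _).2.1, (G1 N _).2.2, mul_neg, mul_div_cancel_left₀ _ h0,
            mul_div_cancel₀ _ h0]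
        exact ⟨h20.neg, h21.neg, h11, h12, h02, h22.neg, h10, h00, h01⟩
      · rw [mem_H2_iff] at hN
        obtain ⟨⟨hU, h00, h01, h11, h12, h22, h02, h10, h20, h21⟩, hc⟩ := hN
        refine ⟨g2_U.mul hU, ?_⟩
        simp only [(G2 N _).1, (G2 N _).2.1, (G2 N _).2.2, mul_sub, mul_div_cancel₀ _ h0]
        exact ⟨h00.sub h20, h01.sub h21, h11, h12, h22, h02.sub h22, h10, h20, h21⟩
  · rw [Set.disjoint_left]
    rintro _ hM ⟨N, hN, rfl⟩
    have h := (mem_H2_iff.1 hM).2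
    simp only [(G1 N _).1] at h
    have h' := h.neg
    rw [neg_neg] at h'
    exact key hN h'
  · rw [Set.disjoint_left]
    rintro _ hM ⟨N, hN, rfl⟩
    have h := (mem_H2_iff.1 hM).2
    simp only [(G2 N _).1] at h
    have h' := (mem_H2_iff.1 hN).2.sub h
    rw [sub_sub_cancel] at h'
    exact key hN h'
  · rw [Set.disjoint_left]
    rintro _ ⟨N, hN, rfl⟩ ⟨P, hP, h⟩
    have e := congrFun (congrFun h 2) 2
    simp only [(G1 N _).2.2, (G2 P _).2.2] at e
    apply key hP
    rw [e, mul_div_cancel_left₀ _ h0]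
    exact (mem_H2_iff.1 hN).2
end
end

section
/- Fix d ∈ {7,11} and let H^(d) = Γ^(d) ∩ Γ_s^(d). Set g₁' = [[0,0,i/√d],[0,1,0],[i√d,0,0]], and for each integer k with 1 ≤ k ≤ (d−1)/2 set g'_{2k} = [[1,0,ik/√d],[0,1,0],[0,0,1]] and g'_{2k+1} = [[1,0,−ik/√d],[0,1,0],[0,0,1]]. Then Γ_s^(d) is the disjoint union of the d+1 left cosets H^(d), g₁'H^(d), and g'_mH^(d) for m = 2,…,d; in particular these cosets are pairwise disjoint and their union is all of Γ_s^(d). -/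
noncomputable section

open Matrix

/-- `i√d`. -/
def isqd (d : ℕ) : ℂ := Complex.I * (Real.sqrt d : ℂ)

/-- `ω_d = (1 + i√d)/2`. -/
def ωd (d : ℕ) : ℂ := (1 + Complex.I * (Real.sqrt d : ℂ)) / 2

/-- Membership in the ring of integers `O_d = ℤ + ℤ·ω_d` (for `d ≡ 3 mod 4`). -/
def inOd (d : ℕ) (z : ℂ) : Prop := ∃ a b : ℤ, z = (a : ℂ) + (b : ℂ) * ωd d

/-- The Picard modular group `Γ^(d)` (as a set of matrices). -/
def GammaPd (d : ℕ) : Set (Matrix (Fin 3) (Fin 3) ℂ) :=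
  {M | inU21 M ∧ ∀ j k : Fin 3, inOd d (M j k)}

/-- The sister group `Γ_s^(d)` (as a set of matrices). -/
def GammaSd (d : ℕ) : Set (Matrix (Fin 3) (Fin 3) ℂ) :=
  {M | inU21 M ∧ inOd d (M 0 0) ∧ inOd d (M 0 1) ∧ inOd d (M 1 1) ∧ inOd d (M 1 2) ∧
    inOd d (M 2 2) ∧ inOd d (isqd d * M 0 2) ∧ inOd d (M 1 0 / isqd d) ∧
    inOd d (M 2 0 / isqd d) ∧ inOd d (M 2 1 / isqd d)}

/-- `H^(d) = Γ^(d) ∩ Γ_s^(d)`. -/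
def Hd (d : ℕ) : Set (Matrix (Fin 3) (Fin 3) ℂ) := GammaPd d ∩ GammaSd d

/-- The coset representatives `g'_m` for `Γ_s^(d)`: `g'₀ = 1`, `g'₁`, and for
`1 ≤ k ≤ (d-1)/2` the matrices `g'_{2k}` and `g'_{2k+1}`. -/
def gmat' (d m : ℕ) : Matrix (Fin 3) (Fin 3) ℂ :=
  if m = 0 then 1
  else if m = 1 then
    !![0, 0, Complex.I / (Real.sqrt d : ℂ); 0, 1, 0; Complex.I * (Real.sqrt d : ℂ), 0, 0]
  else if m % 2 = 0 then
    !![1, 0, Complex.I * ((m / 2 : ℕ) : ℂ) / (Real.sqrt d : ℂ); 0, 1, 0; 0, 0, 1]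
  else
    !![1, 0, -(Complex.I * ((m / 2 : ℕ) : ℂ) / (Real.sqrt d : ℂ)); 0, 1, 0; 0, 0, 1]

lemma isqd_sq (d : ℕ) : isqd d * isqd d = -(d : ℂ) := by
  unfold isqd
  have h : ((Real.sqrt d : ℝ) : ℂ) * ((Real.sqrt d : ℝ) : ℂ) = (d : ℂ) := by
    rw [← Complex.ofReal_mul, Real.mul_self_sqrt (Nat.cast_nonneg d)]; simp
  linear_combination Complex.I * Complex.I * h + (d : ℂ) * Complex.I_mul_I

lemma two_omega (d : ℕ) : 2 * ωd d = 1 + isqd d := by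
  unfold ωd isqd; ring

lemma omega_sq (d q : ℕ) (hd : d = 4 * q + 3) : ωd d * ωd d = ωd d - ((q : ℂ) + 1) := by
  have h1 := isqd_sq d
  have h2 := two_omega d
  have h3 : (d : ℂ) = 4 * q + 3 := by rw [hd]; push_cast; ring
  rw [h3] at h1
  have h4 : isqd d = 2 * ωd d - 1 := by linear_combination -h2
  rw [h4] at h1
  linear_combination h1 / 4

lemma isqd_ne (d q : ℕ) (hd : d = 4 * q + 3) : isqd d ≠ 0 := by
  intro h
  have h1 := isqd_sq d
  rw [h] at h1
  have : (d : ℂ) = 0 := by linear_combination h1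
  have : d = 0 := by exact_mod_cast this
  omega

lemma O_add {d : ℕ} {x y : ℂ} (hx : inOd d x) (hy : inOd d y) : inOd d (x + y) := by
  obtain ⟨a, b, rfl⟩ := hx
  obtain ⟨a', b', rfl⟩ := hy
  exact ⟨a + a', b + b', by push_cast; ring⟩

lemma O_neg {d : ℕ} {x : ℂ} (hx : inOd d x) : inOd d (-x) := by
  obtain ⟨a, b, rfl⟩ := hx
  exact ⟨-a, -b, by push_cast; ring⟩

lemma O_sub {d : ℕ} {x y : ℂ} (hx : inOd d x) (hy : inOd d y) : inOd d (x - y) := by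
  rw [sub_eq_add_neg]; exact O_add hx (O_neg hy)

lemma O_int (d : ℕ) (n : ℤ) : inOd d (n : ℂ) := ⟨n, 0, by simp⟩

lemma O_mul {d q : ℕ} (hd : d = 4 * q + 3) {x y : ℂ} (hx : inOd d x) (hy : inOd d y) :
    inOd d (x * y) := by
  obtain ⟨a, b, rfl⟩ := hx
  obtain ⟨a', b', rfl⟩ := hy
  refine ⟨a * a' - b * b' * (q + 1), a * b' + b * a' + b * b', ?_⟩
  have h := omega_sq d q hd
  push_cast
  linear_combination (b : ℂ) * b' * h

lemma O_s (d : ℕ) : inOd d (isqd d) := ⟨-1, 2, by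
  have := two_omega d
  push_cast; linear_combination -this⟩

lemma conj_s (d : ℕ) : star (isqd d) = -isqd d := by
  simp [isqd]

lemma O_conj {d : ℕ} {x : ℂ} (hx : inOd d x) : inOd d (star x) := by
  obtain ⟨a, b, rfl⟩ := hx
  refine ⟨a + b, -b, ?_⟩
  have h2 := two_omega d
  have h3 : star (ωd d) = 1 - ωd d := by
    have : ωd d = (1 + isqd d) / 2 := by linear_combination h2 / 2
    rw [this, star_div₀, star_add, conj_s]; simp; ring
  simp only [star_add, star_mul', h3]
  simp; ring

/-- Every element of `O_d` is congruent to an integer modulo `i√d`. -/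
lemma O_res {d q : ℕ} (hd : d = 4 * q + 3) {x : ℂ} (hx : inOd d x) :
    ∃ n : ℤ, ∃ y, inOd d y ∧ x = n + isqd d * y := by
  obtain ⟨a, b, rfl⟩ := hx
  refine ⟨a + b * (2 * q + 2), b * ωd d, ⟨0, b, by simp⟩, ?_⟩
  have h2 := two_omega d
  have h1 := omega_sq d q hd
  have h4 : isqd d = 2 * ωd d - 1 := by linear_combination -h2
  rw [h4]
  push_cast
  linear_combination -2 * (b : ℂ) * h1

lemma s_dvd_int {d q : ℕ} (hd : d = 4 * q + 3) {n : ℤ} {y : ℂ} (hy : inOd d y)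
    (h : (n : ℂ) = isqd d * y) : (d : ℤ) ∣ n := by
  obtain ⟨a, b, rfl⟩ := hy
  have hs := isqd_sq d
  have h2 := two_omega d
  have hpos : 0 < Real.sqrt d := Real.sqrt_pos.mpr (by rw [hd]; positivity)
  have h5 : (2 * n + b * d : ℂ) = isqd d * (2 * a + b) := by
    linear_combination 2 * h + (b : ℂ) * isqd d * h2 + b * hs
  have h6 : (2 * a + b : ℝ) = 0 := by
    have := congrArg Complex.im h5
    simp [isqd] at this
    rcases this with h | h
    · omega
    · exact h
  have h7 : (2 * a + b : ℂ) = 0 := by exact_mod_cast h6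
  rw [h7, mul_zero] at h5
  have h8 : 2 * n + b * d = 0 := by exact_mod_cast h5
  have h9 : 2 * a + b = 0 := by exact_mod_cast h6
  refine ⟨a, ?_⟩
  have : b = -2 * a := by omega
  subst this
  linarith

lemma int_s_dvd {d : ℕ} {n : ℤ} (h : (d : ℤ) ∣ n) : ∃ y, inOd d y ∧ (n : ℂ) = isqd d * y := by
  obtain ⟨k, rfl⟩ := h
  refine ⟨-(k * isqd d), O_neg ?_, ?_⟩
  · have h2 := two_omega d
    exact ⟨-k, 2 * k, by push_cast; linear_combination -(k : ℂ) * h2⟩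
  · have := isqd_sq d
    push_cast; linear_combination (k : ℂ) * this

lemma U_mul {A B : Matrix (Fin 3) (Fin 3) ℂ} (hA : inU21 A) (hB : inU21 B) : inU21 (A * B) := by
  refine ⟨hA.1.mul hB.1, ?_⟩
  rw [conjTranspose_mul]
  calc Bᴴ * Aᴴ * matJ * (A * B) = Bᴴ * (Aᴴ * matJ * A) * B := by simp only [Matrix.mul_assoc]
    _ = matJ := by rw [hA.2, hB.2]

/-- Upper triangular representative. -/
def gU (d : ℕ) (x : ℤ) : Matrix (Fin 3) (Fin 3) ℂ := !![1, 0, -x / isqd d; 0, 1, 0; 0, 0, 1]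

/-- Antidiagonal representative. -/
def gV (d : ℕ) (e : ℤ) : Matrix (Fin 3) (Fin 3) ℂ :=
  !![0, 0, -e / isqd d; 0, 1, 0; e * isqd d, 0, 0]

lemma gU_mul (d : ℕ) (x : ℤ) : gU d x * gU d (-x) = 1 := by
  ext i j
  fin_cases i <;> fin_cases j <;> simp [gU, Matrix.mul_apply, Fin.sum_univ_three]
  ring

lemma gV_mul {d q : ℕ} (hd : d = 4 * q + 3) (e : ℤ) (he : e * e = 1) :
    gV d e * gV d (-e) = 1 := by
  have hs := isqd_ne d q hd
  have he' : (e : ℂ) * e = 1 := by exact_mod_cast he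
  ext i j
  fin_cases i <;> fin_cases j <;> simp [gV, Matrix.mul_apply, Fin.sum_univ_three]
  · field_simp; linear_combination he'
  · field_simp; linear_combination he'

lemma gU_U (d : ℕ) (x : ℤ) : inU21 (gU d x) := by
  refine ⟨IsUnit.of_mul_eq_one _ (gU_mul d x), ?_⟩
  have hc := conj_s d
  ext i j
  fin_cases i <;> fin_cases j <;>
    simp [gU, matJ, Matrix.mul_apply, Fin.sum_univ_three, conjTranspose_apply]
  have hc' : (starRingEnd ℂ) (isqd d) = - isqd d := hc
  rw [hc']
  ring

lemma gV_U {d q : ℕ} (hd : d = 4 * q + 3) (e : ℤ) (he : e * e = 1) : inU21 (gV d e) := by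
  refine ⟨IsUnit.of_mul_eq_one _ (gV_mul hd e he), ?_⟩
  have hc' : (starRingEnd ℂ) (isqd d) = - isqd d := conj_s d
  have hs := isqd_ne d q hd
  have he' : (e : ℂ) * e = 1 := by exact_mod_cast he
  ext i j
  fin_cases i <;> fin_cases j <;>
    simp [gV, matJ, Matrix.mul_apply, Fin.sum_univ_three, conjTranspose_apply, hc']
  · field_simp; linear_combination he'
  · field_simp; linear_combination he'

lemma gU_S {d q : ℕ} (hd : d = 4 * q + 3) (x : ℤ) {M : Matrix (Fin 3) (Fin 3) ℂ}
    (hM : M ∈ GammaSd d) : gU d x * M ∈ GammaSd d := by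
  obtain ⟨hU, h00, h01, h11, h12, h22, h02, h10, h20, h21⟩ := hM
  have hs := isqd_ne d q hd
  have hx := O_int d x
  refine ⟨U_mul (gU_U d x) hU, ?_, ?_, ?_, ?_, ?_, ?_, ?_, ?_, ?_⟩ <;>
    simp [gU, Matrix.mul_apply, Fin.sum_univ_three] <;> try assumption
  · convert O_sub h00 (O_mul hd hx h20) using 1; ring
  · convert O_sub h01 (O_mul hd hx h21) using 1; ring
  · convert O_sub h02 (O_mul hd hx h22) using 1; field_simp; ring

lemma gV_S {d q : ℕ} (hd : d = 4 * q + 3) (e : ℤ) (he : e * e = 1)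
    {M : Matrix (Fin 3) (Fin 3) ℂ}
    (hM : M ∈ GammaSd d) : gV d e * M ∈ GammaSd d := by
  obtain ⟨hU, h00, h01, h11, h12, h22, h02, h10, h20, h21⟩ := hM
  have hs := isqd_ne d q hd
  have hx := O_int d e
  refine ⟨U_mul (gV_U hd e he) hU, ?_, ?_, ?_, ?_, ?_, ?_, ?_, ?_, ?_⟩ <;>
    simp [gV, Matrix.mul_apply, Fin.sum_univ_three] <;> try assumption
  · convert O_neg (O_mul hd hx h20) using 1; ring
  · convert O_neg (O_mul hd hx h21) using 1; ring
  · convert O_mul hd hx h02 using 1; ring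
  · convert O_neg (O_mul hd hx h22) using 1; field_simp
  · convert O_mul hd hx h00 using 1; field_simp
  · convert O_mul hd hx h01 using 1; field_simp

lemma Hd_iff {d q : ℕ} (hd : d = 4 * q + 3) (M : Matrix (Fin 3) (Fin 3) ℂ) :
    M ∈ Hd d ↔ M ∈ GammaSd d ∧ inOd d (M 0 2) := by
  constructor
  · rintro ⟨h1, h2⟩
    exact ⟨h2, h1.2 0 2⟩
  · rintro ⟨h, hc⟩
    refine ⟨⟨h.1, ?_⟩, h⟩
    obtain ⟨hU, h00, h01, h11, h12, h22, h02, h10, h20, h21⟩ := h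
    have hs := isqd_ne d q hd
    have key : ∀ z, inOd d (z / isqd d) → inOd d z := by
      intro z hz
      have := O_mul hd (O_s d) hz
      rwa [mul_div_cancel₀ _ hs] at this
    intro j k
    fin_cases j <;> fin_cases k
    · exact h00
    · exact h01
    · exact hc
    · exact key _ h10
    · exact h11
    · exact h12
    · exact key _ h20
    · exact key _ h21
    · exact h22

lemma mem_gU {d q : ℕ} (hd : d = 4 * q + 3) (x : ℤ) (M : Matrix (Fin 3) (Fin 3) ℂ) :
    M ∈ (gU d x * ·) '' Hd d ↔
      M ∈ GammaSd d ∧ ∃ y, inOd d y ∧ isqd d * M 0 2 + x * M 2 2 = isqd d * y := by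
  have hs := isqd_ne d q hd
  constructor
  · rintro ⟨N, hN, rfl⟩
    rw [Hd_iff hd] at hN
    refine ⟨gU_S hd x hN.1, N 0 2, hN.2, ?_⟩
    simp [gU, Matrix.mul_apply, Fin.sum_univ_three]
    field_simp; ring
  · rintro ⟨hM, y, hy, h⟩
    refine ⟨gU d (-x) * M, ?_, ?_⟩
    · rw [Hd_iff hd]
      refine ⟨gU_S hd _ hM, ?_⟩
      convert hy using 1
      apply mul_left_cancel₀ hs
      rw [← h]
      simp [gU, Matrix.mul_apply, Fin.sum_univ_three]
      field_simp
    · simp only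
      rw [← Matrix.mul_assoc, gU_mul, Matrix.one_mul]

lemma mem_gV {d q : ℕ} (hd : d = 4 * q + 3) (M : Matrix (Fin 3) (Fin 3) ℂ) :
    M ∈ (gV d 1 * ·) '' Hd d ↔
      M ∈ GammaSd d ∧ ∃ y, inOd d y ∧ M 2 2 = isqd d * y := by
  have hs := isqd_ne d q hd
  constructor
  · rintro ⟨N, hN, rfl⟩
    rw [Hd_iff hd] at hN
    refine ⟨gV_S hd 1 (by norm_num) hN.1, N 0 2, hN.2, ?_⟩
    simp [gV, Matrix.mul_apply, Fin.sum_univ_three]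
  · rintro ⟨hM, y, hy, h⟩
    refine ⟨gV d (-1) * M, ?_, ?_⟩
    · rw [Hd_iff hd]
      refine ⟨gV_S hd _ (by norm_num) hM, ?_⟩
      convert hy using 1
      apply mul_left_cancel₀ hs
      rw [← h]
      simp [gV, Matrix.mul_apply, Fin.sum_univ_three]
      field_simp
    · simp only
      rw [← Matrix.mul_assoc, gV_mul hd 1 (by norm_num), Matrix.one_mul]

/-- `i√d·M₁₃` and `M₃₃` are never both divisible by `i√d`. -/
lemma not_both {d q : ℕ} (hd : d = 4 * q + 3) (M : Matrix (Fin 3) (Fin 3) ℂ)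
    (hM : M ∈ GammaSd d) {y z : ℂ} (hy : inOd d y) (hz : inOd d z)
    (h1 : isqd d * M 0 2 = isqd d * y) (h2 : M 2 2 = isqd d * z) : False := by
  obtain ⟨hU, h00, h01, h11, h12, h22, h02, h10, h20, h21⟩ := hM
  have hs := isqd_ne d q hd
  have h3 := mul_left_cancel₀ hs h1
  have e := congrFun (congrFun hU.2 0) 2
  have hc' : (starRingEnd ℂ) (isqd d) = - isqd d := conj_s d
  simp [matJ, Matrix.mul_apply, Fin.sum_univ_three, conjTranspose_apply] at e
  have e1 : M 1 0 = isqd d * (M 1 0 / isqd d) := by field_simp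
  have e2 : M 2 0 = isqd d * (M 2 0 / isqd d) := by field_simp
  generalize M 1 0 / isqd d = u at *
  generalize M 2 0 / isqd d = v at *
  rw [e1, e2, h3, h2] at e
  simp only [map_mul, hc'] at e
  have hin : inOd d (-(star v * y) - star u * M 1 2 + star (M 0 0) * z) :=
    O_add (O_sub (O_neg (O_mul hd (O_conj h20) hy)) (O_mul hd (O_conj h10) h12))
      (O_mul hd (O_conj h00) hz)
  have := s_dvd_int hd (n := 1) hin (by
    rw [Int.cast_one, ← e]
    simp only [starRingEnd_apply]
    ring)
  have := Int.le_of_dvd (by norm_num) this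
  omega

/-- The integer parameter of the `m`-th representative. -/
def kk (m : ℕ) : ℤ := if m % 2 = 0 then ((m / 2 : ℕ) : ℤ) else -((m / 2 : ℕ) : ℤ)

lemma Idiv {d q : ℕ} (hd : d = 4 * q + 3) :
    Complex.I / (Real.sqrt d : ℂ) = -1 / isqd d := by
  have hs := isqd_ne d q hd
  have h0 : ((Real.sqrt d : ℝ) : ℂ) ≠ 0 := by
    intro h; apply hs; simp [isqd, h]
  unfold isqd
  field_simp
  exact Complex.I_sq

lemma gmat_one {d q : ℕ} (hd : d = 4 * q + 3) : gmat' d 1 = gV d 1 := by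
  have := Idiv hd
  simp [gmat', gV, this, isqd]

lemma gmat_ne {d q : ℕ} (hd : d = 4 * q + 3) {m : ℕ} (hm : m ≠ 1) : gmat' d m = gU d (kk m) := by
  have h := Idiv hd
  by_cases h0 : m = 0
  · subst h0
    ext i j
    fin_cases i <;> fin_cases j <;> simp [gmat', gU, kk]
  · unfold gmat' gU kk
    rw [if_neg h0, if_neg hm]
    have e : ∀ k : ℕ, Complex.I * (k : ℂ) / (Real.sqrt d : ℂ) = -k / isqd d := by
      intro k; linear_combination (k : ℂ) * h
    split_ifs with h2
    · rw [e]; push_cast; rfl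
    · rw [e, Int.cast_neg, Int.cast_natCast, neg_div, neg_div, neg_neg, neg_div, neg_neg]

lemma kk_exists {d q : ℕ} (hd : d = 4 * q + 3) (hp : d.Prime) (c l : ℤ) (hl : ¬ (d : ℤ) ∣ l) :
    ∃ m, m < d + 1 ∧ m ≠ 1 ∧ (d : ℤ) ∣ c + kk m * l := by
  have := Fact.mk hp
  have hl' : (l : ZMod d) ≠ 0 := by rwa [Ne, ZMod.intCast_zmod_eq_zero_iff_dvd]
  obtain ⟨x, hx⟩ : ∃ x : ℤ, (x : ZMod d) = -c / l := ZMod.intCast_surjective _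
  have hm : ∃ m, m < d + 1 ∧ m ≠ 1 ∧ kk m = x.bmod d := by
    have hdpos : 0 < d := hp.pos
    have b1 := Int.le_bmod (x := x) hdpos
    have b2 := Int.bmod_lt (x := x) hdpos
    generalize x.bmod d = r at *
    by_cases hr : 0 ≤ r
    · refine ⟨2 * r.toNat, by omega, by omega, ?_⟩
      unfold kk; rw [if_pos (by omega)]; omega
    · refine ⟨2 * (-r).toNat + 1, by omega, by omega, ?_⟩
      unfold kk; rw [if_neg (by omega)]; omega
  obtain ⟨m, h1, h2, h3⟩ := hm
  refine ⟨m, h1, h2, ?_⟩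
  rw [← ZMod.intCast_zmod_eq_zero_iff_dvd, h3]
  have : ((x.bmod d : ℤ) : ZMod d) = x := by
    rw [ZMod.intCast_eq_intCast_iff]
    exact Int.bmod_emod
  push_cast
  rw [this, hx]
  field_simp
  ring

lemma kk_inj {d : ℕ} (hd : d % 2 = 1) {m n : ℕ} (hm : m < d + 1) (hn : n < d + 1) (hm1 : m ≠ 1)
    (hn1 : n ≠ 1) (h : (d : ℤ) ∣ kk m - kk n) : m = n := by
  have h1 : kk m - kk n = 0 := by
    apply Int.eq_zero_of_abs_lt_dvd h
    unfold kk
    rw [abs_lt]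
    split_ifs <;> omega
  unfold kk at h1
  split_ifs at h1 <;> omega

lemma main_aux {d q : ℕ} (hd : d = 4 * q + 3) (hp : d.Prime) :
      (GammaSd d = ⋃ m ∈ Finset.range (d + 1), (gmat' d m * ·) '' Hd d) ∧
      (∀ m ∈ Finset.range (d + 1), ∀ n ∈ Finset.range (d + 1), m ≠ n →
        Disjoint ((gmat' d m * ·) '' Hd d) ((gmat' d n * ·) '' Hd d)) := by
  have hs := isqd_ne d q hd
  constructor
  · apply Set.Subset.antisymm
    · intro M hM
      have h22 := hM.2.2.2.2.2.1
      have h02 := hM.2.2.2.2.2.2.1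
      obtain ⟨l, y, hy, hl⟩ := O_res hd h22
      obtain ⟨c, z, hz, hc⟩ := O_res hd h02
      simp only [Set.mem_iUnion, Finset.mem_range]
      by_cases hdl : (d : ℤ) ∣ l
      · refine ⟨1, by omega, ?_⟩
        rw [gmat_one hd, mem_gV hd]
        obtain ⟨w, hw, hlw⟩ := int_s_dvd hdl
        exact ⟨hM, w + y, O_add hw hy, by rw [hl, hlw]; ring⟩
      · obtain ⟨m, h1, h2, h3⟩ := kk_exists hd hp c l hdl
        refine ⟨m, h1, ?_⟩
        rw [gmat_ne hd h2, mem_gU hd]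
        obtain ⟨w, hw, hlw⟩ := int_s_dvd h3
        refine ⟨hM, w + z + kk m * y, O_add (O_add hw hz) (O_mul hd (O_int d _) hy), ?_⟩
        push_cast at hlw
        rw [hl, hc]; linear_combination hlw
    · intro M hM
      simp only [Set.mem_iUnion] at hM
      obtain ⟨m, -, hM⟩ := hM
      by_cases h : m = 1
      · subst h
        rw [gmat_one hd, mem_gV hd] at hM
        exact hM.1
      · rw [gmat_ne hd h, mem_gU hd] at hM
        exact hM.1
  · have one : ∀ n : ℕ, n ≠ 1 →
        Disjoint ((gmat' d 1 * ·) '' Hd d) ((gmat' d n * ·) '' Hd d) := by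
      intro n hn
      rw [Set.disjoint_left, gmat_one hd, gmat_ne hd hn]
      intro M h1 h2
      rw [mem_gV hd] at h1
      rw [mem_gU hd] at h2
      obtain ⟨hM, z, hz, e1⟩ := h1
      obtain ⟨-, y, hy, e2⟩ := h2
      refine not_both hd M hM (O_sub hy (O_mul hd (O_int d (kk n)) hz)) hz ?_ e1
      rw [e1] at e2
      linear_combination e2
    intro m hm n hn hmn
    rw [Finset.mem_range] at hm hn
    by_cases hm1 : m = 1
    · subst hm1; exact one n (Ne.symm hmn)
    by_cases hn1 : n = 1
    · subst hn1; exact (one m hm1).symm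
    rw [Set.disjoint_left, gmat_ne hd hm1, gmat_ne hd hn1]
    intro M h1 h2
    rw [mem_gU hd] at h1 h2
    obtain ⟨hM, z, hz, e1⟩ := h1
    obtain ⟨-, y, hy, e2⟩ := h2
    obtain ⟨l, w, hw, hl⟩ := O_res hd hM.2.2.2.2.2.1
    have hdv : (d : ℤ) ∣ (kk m - kk n) * l := by
      refine s_dvd_int hd (O_sub (O_sub hz hy) (O_mul hd (O_int d (kk m - kk n)) hw)) ?_
      rw [hl] at e1 e2
      push_cast
      linear_combination e1 - e2
    rcases (Nat.prime_iff_prime_int.mp hp).dvd_or_dvd hdv with h | h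
    · exact hmn (kk_inj (by omega) hm hn hm1 hn1 h)
    · obtain ⟨v, hv, hlv⟩ := int_s_dvd h
      have e3 : M 2 2 = isqd d * (v + w) := by rw [hl, hlv]; ring
      refine not_both hd M hM (O_sub hz (O_mul hd (O_int d (kk m)) (O_add hv hw)))
        (O_add hv hw) ?_ e3
      rw [e3] at e1
      linear_combination e1

/-- For `d ∈ {7,11}`, `Γ_s^(d)` is the disjoint union of the `d+1` left cosets
`g'_m H^(d)`, `m = 0, 1, …, d`. -/
theorem gammaSd_coset_decomposition :
    ∀ d ∈ ({7, 11} : Set ℕ),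
      (GammaSd d = ⋃ m ∈ Finset.range (d + 1), (gmat' d m * ·) '' Hd d) ∧
      (∀ m ∈ Finset.range (d + 1), ∀ n ∈ Finset.range (d + 1), m ≠ n →
        Disjoint ((gmat' d m * ·) '' Hd d) ((gmat' d n * ·) '' Hd d)) := by
  intro d hd
  rcases hd with rfl | hd
  · exact main_aux (q := 1) (by norm_num) (by norm_num)
  · rw [Set.mem_singleton_iff] at hd
    subst hd
    exact main_aux (q := 2) (by norm_num) (by norm_num)
end
end
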